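/- For distinct odd primes p and q, there is no finite graph Γ with Aut(Γ) isomorphic to the dihedral group D_{pq} of order 2pq whose minimal base size (determining number) equals 3; hence the determining set of D_{pq} is {1, 2} while the base size set of D_{pq} contains 3. -/

import Mathlib

/-- The automorphism group of a simple graph, as a subgroup of the permutation group of
its vertices. -/
def graphAut {V : Type*} (Γ : SimpleGraph V) : Subgroup (Equiv.Perm V) where
  carrier := {φ | ∀ u v, Γ.Adj (φ u) (φ v) ↔ Γ.Adj u v}
  one_mem' := by intro u v; rfl
  mul_mem' := by
    intro a b ha hb u v
    simpa [Equiv.Perm.mul_apply] using (ha (b u) (b v)).trans (hb u v)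
  inv_mem' := by
    intro a ha u v
    simpa using (ha (a⁻¹ u) (a⁻¹ v)).symm

/-- The base size of the natural action of a subgroup of `Equiv.Perm S` on `S`. -/
noncomputable def permBaseSize {S : Type*} (G : Subgroup (Equiv.Perm S)) : ℕ :=
  sInf {n | ∃ B : Finset S,
    (∀ g ∈ G, (∀ x ∈ B, g x = x) → g = 1) ∧ B.card = n}

/-- The base size (determining number) of a graph: the minimal cardinality of a set of
vertices whose pointwise stabilizer in the automorphism group is trivial. -/
noncomputable def graphBaseSize {V : Type*} (Γ : SimpleGraph V) : ℕ :=
  permBaseSize (graphAut Γ)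

/-- Build a permutation representation from an action function. -/
def permHomOfAct {G : Type*} [Group G] {α : Type*} (f : G → α → α)
    (h1 : ∀ x, f 1 x = x) (hm : ∀ g h x, f (g * h) x = f g (f h x)) : G →* Equiv.Perm α :=
  letI : MulAction G α := { smul := f, one_smul := h1, mul_smul := hm }
  MulAction.toPermHom G α

theorem permHomOfAct_apply {G : Type*} [Group G] {α : Type*} (f : G → α → α)
    (h1 : ∀ x, f 1 x = x) (hm : ∀ g h x, f (g * h) x = f g (f h x)) (g : G) (x : α) :
    permHomOfAct f h1 hm g x = f g x := rfl

theorem permBaseSize_range {G : Type*} [Group G] {S : Type*} (ψ : G →* Equiv.Perm S)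
    (hinj : Function.Injective ψ) (m : ℕ)
    (h1 : ∃ B : Finset S, B.card = m ∧ ∀ g, (∀ x ∈ B, ψ g x = x) → g = 1)
    (h2 : ∀ B : Finset S, (∀ g, (∀ x ∈ B, ψ g x = x) → g = 1) → m ≤ B.card) :
    permBaseSize ψ.range = m := by
  unfold permBaseSize
  apply le_antisymm
  · apply Nat.sInf_le
    obtain ⟨B, hB, h⟩ := h1
    refine ⟨B, ?_, hB⟩
    rintro _ ⟨g, rfl⟩ hg
    rw [h g hg, map_one]
  · obtain ⟨B, hB, h⟩ := h1
    apply le_csInf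
    · refine ⟨m, B, ?_, hB⟩
      rintro _ ⟨g, rfl⟩ hg
      rw [h g hg, map_one]
    · rintro k ⟨C, hC, rfl⟩
      apply h2
      intro g hg
      apply hinj
      rw [map_one]
      exact hC _ ⟨g, rfl⟩ hg

section arith

theorem zmod_eq_nat (n : ℕ) [NeZero n] (i : ZMod n) : ∃ k : ℕ, (k : ZMod n) = i :=
  ⟨i.val, ZMod.natCast_zmod_val i⟩

theorem sub_mul_mem {n : ℕ} [NeZero n] (S : AddSubgroup (ZMod n)) {i : ZMod n} (hi : i ∈ S)
    (j : ZMod n) : i * j ∈ S := by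
  obtain ⟨k, rfl⟩ := zmod_eq_nat n j
  have := S.nsmul_mem hi k
  rwa [nsmul_eq_mul, mul_comm] at this

theorem sub_pq {p q : ℕ} (hp : p.Prime) (hq : q.Prime) [NeZero (p * q)]
    (S : AddSubgroup (ZMod (p * q))) {i : ZMod (p * q)} (hi : i ∈ S) (h0 : i ≠ 0) :
    (p : ZMod (p * q)) ∈ S ∨ (q : ZMod (p * q)) ∈ S := by
  obtain ⟨k, rfl⟩ := zmod_eq_nat _ i
  have hg : ((Nat.gcd k (p * q) : ℕ) : ZMod (p * q)) ∈ S := by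
    have h := Nat.gcd_eq_gcd_ab k (p * q)
    have h' : ((Nat.gcd k (p * q) : ℕ) : ZMod (p * q))
        = (k : ZMod (p * q)) * ((Nat.gcdA k (p * q) : ℤ) : ZMod (p * q)) := by
      have := congrArg (Int.cast : ℤ → ZMod (p * q)) h
      push_cast at this
      have h0 : ((p : ZMod (p * q)) * q) = 0 := by exact_mod_cast ZMod.natCast_self (p * q)
      rw [h0, zero_mul, add_zero] at this
      exact this
    rw [h']
    exact sub_mul_mem S hi _
  have key : Nat.gcd k (p * q) ∣ p ∨ Nat.gcd k (p * q) ∣ q := by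
    obtain ⟨d, e, hd, he, hde⟩ := (Nat.dvd_mul).1 (Nat.gcd_dvd_right k (p * q))
    rcases (Nat.dvd_prime hp).1 hd with rfl | rfl
    · right; rw [← hde]; simpa using he
    · rcases (Nat.dvd_prime hq).1 he with rfl | rfl
      · left; rw [← hde]; simp
      · exfalso
        apply h0
        rw [ZMod.natCast_eq_zero_iff]
        rw [hde]
        exact Nat.gcd_dvd_left _ _
  rcases key with ⟨c, hc⟩ | ⟨c, hc⟩
  · left
    have h := congrArg (Nat.cast : ℕ → ZMod (p * q)) hc
    rw [Nat.cast_mul] at h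
    rw [h]
    exact sub_mul_mem S hg _
  · right
    have h := congrArg (Nat.cast : ℕ → ZMod (p * q)) hc
    rw [Nat.cast_mul] at h
    rw [h]
    exact sub_mul_mem S hg _

theorem addsub_half {n : ℕ} [NeZero n] (hn : Odd n) (S : AddSubgroup (ZMod n)) {i : ZMod n}
    (hi : i + i ∈ S) : i ∈ S := by
  obtain ⟨m, hm⟩ := hn
  have h0 : (n : ZMod n) = 0 := ZMod.natCast_self n
  have : i = (i + i) * ((m + 1 : ℕ) : ZMod n) := by
    have h1 : ((2 * m + 1 : ℕ) : ZMod n) = 0 := by rw [← hm]; exact h0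
    push_cast at h1 ⊢
    linear_combination (-i) * h1
  rw [this]
  exact sub_mul_mem S hi _

theorem decomp {p q : ℕ} (hc : Nat.Coprime p q) (i : ZMod (p * q)) :
    ∃ a b : ZMod (p * q), i = (q : ZMod (p * q)) * a + (p : ZMod (p * q)) * b := by
  have h := Nat.gcd_eq_gcd_ab p q
  rw [hc.gcd_eq_one] at h
  have := congrArg (Int.cast : ℤ → ZMod (p * q)) h
  push_cast at this
  refine ⟨(Nat.gcdB p q : ℤ) * i, (Nat.gcdA p q : ℤ) * i, ?_⟩
  linear_combination i * this

end arith

open DihedralGroup in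
/-- rotations fixing a point -/
def rotStab {n : ℕ} {V : Type*} (ψ : DihedralGroup n →* Equiv.Perm V) (v : V) :
    AddSubgroup (ZMod n) where
  carrier := {i | ψ (r i) v = v}
  zero_mem' := by
    show ψ (r 0) v = v
    rw [← one_def, map_one]; rfl
  add_mem' := by
    intro a b ha hb
    show ψ (r (a + b)) v = v
    rw [← r_mul_r, map_mul, Equiv.Perm.mul_apply]
    rw [show ψ (r b) v = v from hb]; exact ha
  neg_mem' := by
    intro a ha
    show ψ (r (-a)) v = v
    have ha' : ψ (r a) v = v := ha
    rw [← inv_r, map_inv, Equiv.Perm.inv_eq_iff_eq]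
    exact ha'.symm

open DihedralGroup in
theorem main_le_two (p q : ℕ) (hp : p.Prime) (hq : q.Prime) (hop : Odd p) (hoq : Odd q)
    (hpq : p ≠ q) {V : Type} (Γ : SimpleGraph V) (ψ : DihedralGroup (p * q) →* Equiv.Perm V)
    (hinj : Function.Injective ψ) (hadj : ∀ g u v, Γ.Adj (ψ g u) (ψ g v) ↔ Γ.Adj u v)
    (hsurj : ∀ τ : Equiv.Perm V, (∀ u v, Γ.Adj (τ u) (τ v) ↔ Γ.Adj u v) → ∃ g, ψ g = τ) :
    ∃ x y : V, ∀ g, ψ g x = x → ψ g y = y → g = 1 := by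
  have : NeZero (p * q) := ⟨Nat.mul_ne_zero hp.ne_zero hq.ne_zero⟩
  have hodd : Odd (p * q) := hop.mul hoq
  have hcop : Nat.Coprime p q := (Nat.coprime_primes hp hq).2 hpq
  have hmul : ∀ g h v, ψ (g * h) v = ψ g (ψ h v) := fun g h v => by
    rw [map_mul, Equiv.Perm.mul_apply]
  have hone : ∀ v, ψ 1 v = v := fun v => by rw [map_one]; rfl
  have mem : ∀ v i, i ∈ rotStab ψ v ↔ ψ (r i) v = v := fun v i => Iff.rfl
  have hpne : (p : ZMod (p * q)) ≠ 0 := by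
    rw [Ne, ZMod.natCast_eq_zero_iff]
    intro h
    have := Nat.le_of_dvd hp.pos h
    nlinarith [hp.two_le, hq.two_le]
  have hqne : (q : ZMod (p * q)) ≠ 0 := by
    rw [Ne, ZMod.natCast_eq_zero_iff]
    intro h
    have := Nat.le_of_dvd hq.pos h
    nlinarith [hp.two_le, hq.two_le]
  -- a reflection fixing v and r i v
  have refl2 : ∀ v i j, ψ (sr j) v = v → ψ (sr j) (ψ (r i) v) = ψ (r i) v →
      i ∈ rotStab ψ v := by
    intro v i j h1 h2
    apply addsub_half hodd
    rw [mem]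
    have e : (r (i + i) : DihedralGroup (p * q)) = sr j * (r (-i) * (sr j * r i)) := by
      simp only [sr_mul_r, r_mul_sr, sr_mul_sr]
      congr 1; ring
    have e2 : ψ (r (-i)) (ψ (r i) v) = v := by
      rw [← hmul, r_mul_r, neg_add_cancel, ← one_def, hone]
    rw [e, hmul, hmul, hmul, h2, e2, h1]
  by_contra hcon
  push Not at hcon
  have step1 : ∀ v, (p : ZMod (p * q)) ∈ rotStab ψ v ∨ (q : ZMod (p * q)) ∈ rotStab ψ v := by
    intro v
    obtain ⟨g, h1, h2, h3⟩ := hcon v (ψ (r 1) v)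
    rcases g with i | i
    · apply sub_pq hp hq _ (i := i) h1
      rintro rfl
      exact h3 rfl
    · left
      have := sub_mul_mem _ (refl2 v 1 i h1 h2) p
      simpa using this
  have moved : ∀ i : ZMod (p * q), i ≠ 0 → ∃ v, i ∉ rotStab ψ v := by
    intro i hi
    by_contra hall
    push Not at hall
    apply hi
    have : (r i : DihedralGroup (p * q)) = 1 := by
      apply hinj
      rw [map_one]
      ext v
      exact hall v
    rw [one_def] at this
    exact r.inj this
  obtain ⟨v0, hv0⟩ := moved _ hqne
  obtain ⟨w0, hw0⟩ := moved _ hpne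
  have hw0q := (step1 w0).resolve_left hw0
  have step3 : ∀ v, (q : ZMod (p * q)) ∉ rotStab ψ v → ∃ j, ψ (sr j) v = v := by
    intro v hv
    obtain ⟨g, h1, h2, h3⟩ := hcon v w0
    rcases g with i | i
    · exfalso
      rcases sub_pq hp hq (rotStab ψ v ⊓ rotStab ψ w0) (i := i) ⟨h1, h2⟩
        (by rintro rfl; exact h3 rfl) with h | h
      · exact hw0 h.2
      · exact hv h.1
    · exact ⟨i, h1⟩
  obtain ⟨j, hj⟩ : ∃ j, ψ (sr j) v0 ≠ v0 := by
    by_contra hall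
    push Not at hall
    apply hv0
    rw [mem]
    have e : (r (q : ZMod (p * q)) : DihedralGroup (p * q)) = sr 0 * sr q := by simp
    rw [e, hmul, hall, hall]
  have sA : ∀ v, (q : ZMod (p * q)) ∉ rotStab ψ v →
      (q : ZMod (p * q)) ∉ rotStab ψ (ψ (sr j) v) := by
    intro v hv h
    apply hv
    rw [← neg_mem_iff, mem]
    have e : (r (-(q : ZMod (p * q))) : DihedralGroup (p * q)) = sr j * (r q * sr j) := by simp
    rw [mem] at h
    rw [e, hmul, hmul, h, ← hmul, sr_mul_sr, sub_self, ← one_def, hone]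
  classical
  let f : V → V := fun v => if (q : ZMod (p * q)) ∈ rotStab ψ v then v else ψ (sr j) v
  have fpos : ∀ v, (q : ZMod (p * q)) ∈ rotStab ψ v → f v = v := fun v h => if_pos h
  have fneg : ∀ v, (q : ZMod (p * q)) ∉ rotStab ψ v → f v = ψ (sr j) v := fun v h => if_neg h
  have finv : Function.Involutive f := by
    intro v
    by_cases h : (q : ZMod (p * q)) ∈ rotStab ψ v
    · rw [fpos v h, fpos v h]
    · rw [fneg v h, fneg _ (sA v h), ← hmul, sr_mul_sr, sub_self, ← one_def, hone]
  have mixed : ∀ v w, (q : ZMod (p * q)) ∉ rotStab ψ v → (q : ZMod (p * q)) ∈ rotStab ψ w →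
      (Γ.Adj (ψ (sr j) v) w ↔ Γ.Adj v w) := by
    intro v w hv hw
    obtain ⟨t, ht⟩ := step3 v hv
    obtain ⟨a, b, hab⟩ := decomp hcop (t - j)
    have e1 : ψ (sr j) v = ψ (r (q * a)) v := by
      have hb := sub_mul_mem _ ((step1 v).resolve_right hv) b
      rw [mem] at hb
      conv_lhs => rw [← ht]
      rw [← hmul, sr_mul_sr, hab, ← r_mul_r, hmul, hb]
    have e2 : ψ (r (q * a)) w = w := (mem _ _).1 (sub_mul_mem _ hw a)
    rw [e1]
    conv_lhs => rw [← e2]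
    exact hadj _ _ _
  obtain ⟨g, hg⟩ := hsurj (finv.toPerm f) (by
    intro u v
    show Γ.Adj (f u) (f v) ↔ _
    by_cases hu : (q : ZMod (p * q)) ∈ rotStab ψ u <;>
      by_cases hv : (q : ZMod (p * q)) ∈ rotStab ψ v
    · rw [fpos u hu, fpos v hv]
    · rw [fpos u hu, fneg v hv, Γ.adj_comm, mixed v u hv hu, Γ.adj_comm]
    · rw [fneg u hu, fpos v hv, mixed u v hu hv]
    · rw [fneg u hu, fneg v hv, hadj])
  have hgf : ∀ v, ψ g v = f v := fun v => by rw [hg]; rfl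
  rcases g with i | i
  · apply hj
    rw [← fneg v0 hv0, ← hgf, ← mem]
    apply addsub_half hodd
    rw [mem, ← r_mul_r, hmul, hgf, hgf, finv]
  · apply hw0
    apply refl2 w0 p i
    · rw [hgf, fpos _ hw0q]
    · rw [hgf, fpos]
      rw [mem, ← hmul, r_mul_r, add_comm, ← r_mul_r, hmul, (mem _ _).1 hw0q]

open DihedralGroup in
theorem part_two (p q : ℕ) (hp : p.Prime) (hq : q.Prime) (hop : Odd p) (hoq : Odd q)
    (hpq : p ≠ q) (V : Type) (Γ : SimpleGraph V)
    (he : Nonempty (graphAut Γ ≃* DihedralGroup (p * q))) :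
    graphBaseSize Γ = 1 ∨ graphBaseSize Γ = 2 := by
  classical
  obtain ⟨e⟩ := he
  let ψ : DihedralGroup (p * q) →* Equiv.Perm V := (graphAut Γ).subtype.comp e.symm.toMonoidHom
  have hψ : ∀ g, ψ g = (e.symm g : Equiv.Perm V) := fun g => rfl
  have hinj : Function.Injective ψ := by
    intro a b h
    rw [hψ, hψ] at h
    exact e.symm.injective (Subtype.ext h)
  have hsurj : ∀ τ ∈ graphAut Γ, ∃ g, ψ g = τ := by
    intro τ hτ
    exact ⟨e ⟨τ, hτ⟩, by rw [hψ, e.symm_apply_apply]⟩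
  obtain ⟨x, y, hxy⟩ := main_le_two p q hp hq hop hoq hpq Γ ψ hinj
    (fun g => (e.symm g).2) (fun τ hτ => hsurj τ hτ)
  have hbase : ∀ g ∈ graphAut Γ, (∀ z ∈ ({x, y} : Finset V), g z = z) → g = 1 := by
    intro g hg h
    obtain ⟨g, rfl⟩ := hsurj g hg
    rw [hxy g (h x (by simp)) (h y (by simp)), map_one]
  have hle : graphBaseSize Γ ≤ 2 :=
    le_trans (Nat.sInf_le ⟨{x, y}, hbase, rfl⟩) Finset.card_le_two
  have hne : graphBaseSize Γ ≠ 0 := by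
    intro h0
    have hmem : graphBaseSize Γ ∈ {n | ∃ B : Finset V,
        (∀ g ∈ graphAut Γ, (∀ x ∈ B, g x = x) → g = 1) ∧ B.card = n} :=
      Nat.sInf_mem ⟨_, {x, y}, hbase, rfl⟩
    obtain ⟨B, hB, hc⟩ := hmem
    rw [h0, Finset.card_eq_zero] at hc
    subst hc
    have h1 := hB (ψ (sr 0)) (e.symm _).2 (by simp)
    rw [← map_one ψ] at h1
    have h2 := hinj h1
    rw [one_def] at h2
    cases h2
  omega

section affine

open DihedralGroup

/-- affine action of the dihedral group on `ZMod m`, given a ring hom. -/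
def affAct {n : ℕ} {R : Type*} [CommRing R] (c : ZMod n →+* R) : DihedralGroup n → R → R
  | r i, x => x + c i
  | sr i, x => -x - c i

/-- affine representation. -/
def affHom {n : ℕ} {R : Type*} [CommRing R] (c : ZMod n →+* R) :
    DihedralGroup n →* Equiv.Perm R :=
  permHomOfAct (affAct c) (by intro x; rw [one_def]; simp [affAct])
    (by
      rintro (i | i) (j | j) x <;> simp [affAct] <;> ring)

theorem affHom_r {n : ℕ} {R : Type*} [CommRing R] (c : ZMod n →+* R) (i x) :
    affHom c (r i) x = x + c i := rfl

theorem affHom_sr {n : ℕ} {R : Type*} [CommRing R] (c : ZMod n →+* R) (i x) :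
    affHom c (sr i) x = -x - c i := rfl

/-- the cycle graph -/
def cyc (n : ℕ) (hn : 1 < n) : SimpleGraph (ZMod n) where
  Adj i j := j = i + 1 ∨ i = j + 1
  symm := ⟨by intro i j h; tauto⟩
  loopless := ⟨by
    intro i h
    have : Fact (1 < n) := ⟨hn⟩
    simp at h⟩

theorem two_ne {n : ℕ} (h2 : 2 < n) : (2 : ZMod n) ≠ 0 := by
  intro h
  have : ((2 : ℕ) : ZMod n) = 0 := by exact_mod_cast h
  rw [ZMod.natCast_eq_zero_iff] at this
  have := Nat.le_of_dvd (by norm_num) this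
  omega

theorem cycle_part {n : ℕ} (h2 : 2 < n) :
    ∃ (V : Type) (_ : Fintype V) (Γ : SimpleGraph V),
        Nonempty (graphAut Γ ≃* DihedralGroup n) ∧ graphBaseSize Γ = 2 := by
  have : NeZero n := ⟨by omega⟩
  have h1 : 1 < n := by omega
  have h2' := two_ne h2
  have : Fact (1 < n) := ⟨h1⟩
  let ψ := affHom (RingHom.id (ZMod n))
  have ψr : ∀ i x, ψ (r i) x = x + i := fun i x => rfl
  have ψs : ∀ i x, ψ (sr i) x = -x - i := fun i x => rfl
  have hfree : ∀ g, ψ g 0 = 0 → ψ g 1 = 1 → g = 1 := by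
    rintro (i | i) ha hb
    · rw [ψr] at ha
      rw [one_def]; congr 1; simpa using ha
    · rw [ψs] at ha hb
      exfalso; apply h2'
      linear_combination ha - hb
  have hinj : Function.Injective ψ := by
    rw [injective_iff_map_eq_one]
    intro g hg
    apply hfree g <;> rw [hg] <;> rfl
  have hrange : ψ.range = graphAut (cyc n h1) := by
    ext φ
    constructor
    · rintro ⟨g, rfl⟩
      intro u v
      show (_ ∨ _) ↔ (_ ∨ _)
      rcases g with i | i
      · simp only [ψr]
        grind
      · simp only [ψs]
        grind
    · intro hφ
      have hadj : ∀ u v, (φ v = φ u + 1 ∨ φ u = φ v + 1) ↔ (v = u + 1 ∨ u = v + 1) := hφ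
      obtain ⟨g, hg0, hg1⟩ : ∃ g, ψ g 0 = φ 0 ∧ ψ g 1 = φ 1 := by
        rcases (hadj 0 1).2 (by simp) with h | h
        · exact ⟨r (φ 0), by rw [ψr]; ring, by rw [ψr, h]; ring⟩
        · exact ⟨sr (-φ 0), by rw [ψs]; ring, by rw [ψs, h]; ring⟩
      refine ⟨g, ?_⟩
      have hgadj : ∀ u v, (ψ g v = ψ g u + 1 ∨ ψ g u = ψ g v + 1) ↔ (v = u + 1 ∨ u = v + 1) := by
        intro u v
        rcases g with i | i
        · simp only [ψr]
          grind
        · simp only [ψs]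
          grind
      have key : ∀ k : ℕ, ψ g (k : ZMod n) = φ k ∧ ψ g ((k : ZMod n) + 1) = φ (k + 1) := by
        intro k
        induction k with
        | zero => simpa using ⟨hg0, hg1⟩
        | succ k ih =>
          push_cast
          refine ⟨ih.2, ?_⟩
          have a1 := (hadj ((k : ZMod n) + 1) (k + 1 + 1)).2 (Or.inl rfl)
          have a2 := (hadj (k : ZMod n) (k + 1)).2 (Or.inl rfl)
          have b1 := (hgadj ((k : ZMod n) + 1) (k + 1 + 1)).2 (Or.inl rfl)
          have b2 := (hgadj (k : ZMod n) (k + 1)).2 (Or.inl rfl)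
          have ne : (k : ZMod n) + 1 + 1 ≠ k := by
            intro h; apply h2'; linear_combination h
          have c1 := fun h => ne (φ.injective h)
          have c2 := fun h => ne ((ψ g).injective h)
          obtain ⟨i1, i2⟩ := ih
          rw [i1] at c2 b2
          rw [i2] at b1 b2
          clear hgadj hadj
          generalize ψ g ((k : ZMod n) + 1 + 1) = X at *
          generalize φ ((k : ZMod n) + 1 + 1) = Y at *
          generalize φ ((k : ZMod n) + 1) = Z at *
          generalize φ (k : ZMod n) = W at *
          clear i1 i2 hg0 hg1 hφ ψr ψs hinj hfree ne
          rcases b2 with b2 | b2 <;> rcases b1 with b1 | b1 <;> rcases a1 with a1 | a1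
          · rw [b1, a1]
          · exact absurd (add_right_cancel (a1.symm.trans b2)) c1
          · exact absurd (add_right_cancel (b1.symm.trans b2)) c2
          · exact absurd (add_right_cancel (b1.symm.trans b2)) c2
          · exact absurd (b1.trans b2.symm) c2
          · exact absurd (b1.trans b2.symm) c2
          · exact absurd (a1.trans b2.symm) c1
          · exact add_right_cancel (b1.symm.trans a1)
      ext x
      obtain ⟨k, rfl⟩ := zmod_eq_nat n x
      rw [(key k).1]
  refine ⟨ZMod n, inferInstance, cyc n h1, ⟨?_⟩, ?_⟩
  · rw [← hrange]
    exact (MonoidHom.ofInjective hinj).symm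
  · unfold graphBaseSize
    rw [← hrange]
    apply permBaseSize_range ψ hinj
    · refine ⟨{0, 1}, by simp, ?_⟩
      intro g h
      exact hfree g (h 0 (by simp)) (h 1 (by simp))
    · intro B hB
      by_contra hlt
      have : B.card ≤ 1 := by omega
      rw [Finset.card_le_one_iff_subset_singleton] at this
      obtain ⟨c, hc⟩ := this
      have := hB (sr (-(2 * c))) (by
        intro x hx
        have := hc hx
        rw [Finset.mem_singleton] at this
        subst this
        rw [ψs]; ring)
      rw [one_def] at this
      cases this

end affine

section tri

open DihedralGroup

/-- vertices of the decorated cycle -/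
inductive TV (n : ℕ) : Type
  | a (i : ZMod n) : TV n
  | b (i : ZMod n) : TV n
  | y (i : ZMod n) : TV n

open TV

/-- action -/
def triAct {n : ℕ} : DihedralGroup n → TV n → TV n
  | r k, a i => a (i + k)
  | r k, b i => b (i + k)
  | r k, y i => y (i + k)
  | sr k, a i => b (-i - k)
  | sr k, b i => a (-i - k)
  | sr k, y i => y (-i - k)

/-- oriented edges -/
def triE {n : ℕ} : TV n → TV n → Prop
  | a i, b j => i = j ∨ i = j + 1
  | b j, a i => i = j ∨ i = j + 1
  | a i, y j => i = j
  | y i, a j => i = j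
  | b i, y j => i = j
  | y i, b j => i = j
  | _, _ => False

/-- decorated cycle -/
def tri (n : ℕ) : SimpleGraph (TV n) where
  Adj := triE
  symm := ⟨by rintro (i | i | i) (j | j | j) h <;> simp_all [triE]⟩
  loopless := ⟨by rintro (i | i | i) h <;> simp_all [triE]⟩

/-- representation on the decorated cycle -/
def triHom (n : ℕ) : DihedralGroup n →* Equiv.Perm (TV n) :=
  permHomOfAct triAct (by rintro (x | x | x) <;> rw [one_def] <;> simp [triAct])
    (by
      rintro (i | i) (j | j) (x | x | x) <;> simp [triAct] <;> ring)

theorem tri_adj {n : ℕ} (g : DihedralGroup n) (u v : TV n) :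
    triE (triAct g u) (triAct g v) ↔ triE u v := by
  rcases g with k | k <;> rcases u with i | i | i <;> rcases v with j | j | j <;>
    simp only [triAct, triE] <;> grind

theorem tri_part {n : ℕ} (h2 : 2 < n) :
    ∃ (V : Type) (_ : Fintype V) (Γ : SimpleGraph V),
        Nonempty (graphAut Γ ≃* DihedralGroup n) ∧ graphBaseSize Γ = 1 := by
  have : NeZero n := ⟨by omega⟩
  have : Fact (1 < n) := ⟨by omega⟩
  have hone : (1 : ZMod n) ≠ 0 := one_ne_zero
  have hfin : Finite (TV n) := by
    apply Finite.of_injective (β := ZMod n × Fin 3)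
      (fun v => match v with | a i => (i, 0) | b i => (i, 1) | y i => (i, 2))
    rintro (i | i | i) (j | j | j) h <;> simp_all
  have hψ : ∀ g v, triHom n g v = triAct g v := fun g v => rfl
  have hfree : ∀ g, triHom n g (a 0) = a 0 → g = 1 := by
    rintro (i | i) h
    · simp [hψ, triAct] at h
      rw [one_def, h]
    · simp [hψ, triAct] at h
  have hinj : Function.Injective (triHom n) := by
    rw [injective_iff_map_eq_one]
    intro g hg
    apply hfree g
    rw [hg]; rfl
  -- the simplicial vertices are exactly of type y
  have hP : ∀ v : TV n, (∀ u w, triE v u → triE v w → u = w ∨ triE u w) ↔ ∃ i, v = y i := by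
    rintro (i | i | i)
    · simp only [reduceCtorEq, exists_false, iff_false]
      intro h
      have := h (y i) (b (i - 1)) (by simp [triE]) (by simp [triE])
      simp only [triE, reduceCtorEq, false_or] at this
      apply hone
      linear_combination this
    · simp only [reduceCtorEq, exists_false, iff_false]
      intro h
      have := h (y i) (a (i + 1)) (by simp [triE]) (by simp [triE])
      simp [triE] at this
    · constructor
      · intro _; exact ⟨i, rfl⟩
      · rintro - (u | u | u) (w | w | w) hu hw <;> simp_all [triE]
  have rigid : ∀ θ : Equiv.Perm (TV n), (∀ u v, triE (θ u) (θ v) ↔ triE u v) →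
      ∀ v, (∃ i, v = y i) → ∃ i, θ v = y i := by
    intro θ hθ v hv
    rw [← hP] at hv ⊢
    intro u w hu hw
    obtain ⟨u, rfl⟩ := θ.surjective u
    obtain ⟨w, rfl⟩ := θ.surjective w
    rw [hθ] at hu hw ⊢
    rcases hv u w hu hw with h | h
    · left; rw [h]
    · right; exact h
  have rigid' : ∀ θ : Equiv.Perm (TV n), (∀ u v, triE (θ u) (θ v) ↔ triE u v) →
      ∀ v, (∃ i, θ v = y i) → ∃ i, v = y i := by
    intro θ hθ v hv
    rw [← hP] at hv ⊢
    intro u w hu hw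
    rcases hv (θ u) (θ w) ((hθ _ _).2 hu) ((hθ _ _).2 hw) with h | h
    · left; exact θ.injective h
    · right; exact (hθ _ _).1 h
  have hrange : (triHom n).range = graphAut (tri n) := by
    ext φ
    constructor
    · rintro ⟨g, rfl⟩
      exact tri_adj g
    · intro hφ
      have hadj : ∀ u v, triE (φ u) (φ v) ↔ triE u v := hφ
      obtain ⟨k, hk⟩ := rigid φ hadj (y 0) ⟨0, rfl⟩
      obtain ⟨g, hga, hgb, hgy⟩ : ∃ g, triHom n g (a 0) = φ (a 0) ∧ triHom n g (b 0) = φ (b 0) ∧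
          triHom n g (y 0) = φ (y 0) := by
        have e1 := (hadj (y 0) (a 0)).2 (by simp [triE])
        have e2 := (hadj (y 0) (b 0)).2 (by simp [triE])
        have e3 : φ (a 0) ≠ φ (b 0) := fun h => by simpa using φ.injective h
        simp only [hψ]
        rw [hk] at e1 e2 ⊢
        generalize φ (a 0) = A at *
        generalize φ (b 0) = B at *
        rcases A with i | i | i <;> rcases B with j | j | j <;> simp only [triE] at e1 e2
        · subst e1; subst e2; exact absurd rfl e3
        · subst e1; subst e2; exact ⟨r k, by simp [triAct]⟩
        · subst e1; subst e2; exact ⟨sr (-k), by simp [triAct]⟩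
        · subst e1; subst e2; exact absurd rfl e3
      refine ⟨g, ?_⟩
      set θ : Equiv.Perm (TV n) := (triHom n g)⁻¹ * φ with hθdef
      have hθ : ∀ u v, triE (θ u) (θ v) ↔ triE u v := by
        intro u v
        rw [hθdef, ← map_inv, Equiv.Perm.mul_apply, Equiv.Perm.mul_apply, hψ, hψ, tri_adj, hadj]
      have fix : ∀ v, triHom n g v = φ v → θ v = v := by
        intro v h
        rw [hθdef, Equiv.Perm.mul_apply, ← h]; simp
      have key : ∀ k : ℕ, θ (a (k : ZMod n)) = a k ∧ θ (b (k : ZMod n)) = b k ∧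
          θ (y (k : ZMod n)) = y k := by
        intro k
        induction k with
        | zero => simpa using ⟨fix _ hga, fix _ hgb, fix _ hgy⟩
        | succ k ih =>
          obtain ⟨ia, ib, iy⟩ := ih
          push_cast
          generalize (k : ZMod n) = t at *
          have hne : t + 1 ≠ t := by simp
          have inj : ∀ u v, θ u = θ v → u = v := fun u v h => θ.injective h
          have ha : θ (a (t + 1)) = a (t + 1) := by
            have e := (hθ (b t) (a (t + 1))).2 (by simp [triE])
            have n1 := fun h => inj (a (t + 1)) (a t) h
            have n2 := fun h => inj (a (t + 1)) (y t) h
            rw [ib] at e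
            rw [ia] at n1
            rw [iy] at n2
            generalize θ (a (t + 1)) = A at *
            rcases A with i | i | i <;> simp only [triE] at e
            · rcases e with e | e
              · subst e; exfalso; have := n1 rfl; simp at this
              · rw [e]
            · subst e; have := n2 rfl; simp at this
          have hb : θ (b (t + 1)) = b (t + 1) := by
            have e := (hθ (a (t + 1)) (b (t + 1))).2 (by simp [triE])
            have n1 := fun h => inj (b (t + 1)) (b t) h
            have n2 := rigid' θ hθ (b (t + 1))
            rw [ha] at e
            rw [ib] at n1
            generalize θ (b (t + 1)) = A at *
            rcases A with i | i | i <;> simp only [triE] at e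
            · rcases e with e | e
              · rw [e]
              · have e' : t = i := by simpa using e
                subst e'; exfalso; have := n1 rfl; simp at this
            · obtain ⟨_, h⟩ := n2 ⟨i, rfl⟩
              cases h
          have hy : θ (y (t + 1)) = y (t + 1) := by
            have e := (hθ (a (t + 1)) (y (t + 1))).2 (by simp [triE])
            obtain ⟨i, hi⟩ := rigid θ hθ (y (t + 1)) ⟨_, rfl⟩
            rw [ha, hi] at e
            simp only [triE] at e
            rw [hi, e]
          exact ⟨ha, hb, hy⟩
      have hθ1 : θ = 1 := by
        ext v
        rcases v with i | i | i <;> obtain ⟨k, rfl⟩ := zmod_eq_nat n i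
        · exact (key k).1
        · exact (key k).2.1
        · exact (key k).2.2
      rw [hθdef, inv_mul_eq_one] at hθ1
      exact hθ1
  refine ⟨TV n, Fintype.ofFinite _, tri n, ⟨?_⟩, ?_⟩
  · rw [← hrange]
    exact (MonoidHom.ofInjective hinj).symm
  · unfold graphBaseSize
    rw [← hrange]
    apply permBaseSize_range _ hinj
    · refine ⟨{a 0}, by simp, ?_⟩
      intro g h
      exact hfree g (h _ (by simp))
    · intro B hB
      by_contra hlt
      have : B = ∅ := by rw [← Finset.card_eq_zero]; omega
      subst this
      have := hB (sr 0) (by simp)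
      rw [one_def] at this
      cases this

end tri

open DihedralGroup in
theorem base_three (p q : ℕ) (hp : p.Prime) (hq : q.Prime) (hop : Odd p) (hoq : Odd q)
    (hpq : p ≠ q) :
    ∃ (n : ℕ) (φ : DihedralGroup (p * q) →* Equiv.Perm (Fin n)),
        Function.Injective φ ∧ permBaseSize φ.range = 3 := by
  classical
  have : NeZero p := ⟨hp.ne_zero⟩
  have : NeZero q := ⟨hq.ne_zero⟩
  have : NeZero (p * q) := ⟨Nat.mul_ne_zero hp.ne_zero hq.ne_zero⟩
  have : Fact (1 < p) := ⟨hp.one_lt⟩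
  have : Fact (1 < q) := ⟨hq.one_lt⟩
  have hcop : Nat.Coprime p q := (Nat.coprime_primes hp hq).2 hpq
  let ep : ZMod (p * q) ≃+* ZMod p × ZMod q := ZMod.chineseRemainder hcop
  let cp : ZMod (p * q) →+* ZMod p := (RingHom.fst _ _).comp ep.toRingHom
  let cq : ZMod (p * q) →+* ZMod q := (RingHom.snd _ _).comp ep.toRingHom
  have crt : ∀ x y, ∃ i, cp i = x ∧ cq i = y := fun x y =>
    ⟨ep.symm (x, y), by simp [cp], by simp [cq]⟩
  have czero : ∀ i, cp i = 0 → cq i = 0 → i = 0 := by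
    intro i h1 h2
    apply ep.injective
    rw [map_zero]
    exact Prod.ext h1 h2
  let S := ZMod p ⊕ ZMod q
  let ψ : DihedralGroup (p * q) →* Equiv.Perm S :=
    (Equiv.Perm.sumCongrHom (ZMod p) (ZMod q)).comp ((affHom cp).prod (affHom cq))
  have ψrl : ∀ i x, ψ (r i) (Sum.inl x) = Sum.inl (x + cp i) := fun i x => rfl
  have ψrr : ∀ i x, ψ (r i) (Sum.inr x) = Sum.inr (x + cq i) := fun i x => rfl
  have ψsl : ∀ i x, ψ (sr i) (Sum.inl x) = Sum.inl (-x - cp i) := fun i x => rfl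
  have ψsr : ∀ i x, ψ (sr i) (Sum.inr x) = Sum.inr (-x - cq i) := fun i x => rfl
  have hp2 : (2 : ZMod p) ≠ 0 := two_ne (by
    have := hp.two_le; rcases hop with ⟨k, hk⟩; omega)
  have hfree : ∀ g, ψ g (Sum.inl 0) = Sum.inl 0 → ψ g (Sum.inl 1) = Sum.inl 1 →
      ψ g (Sum.inr 0) = Sum.inr 0 → g = 1 := by
    rintro (i | i) h1 h2 h3
    · rw [ψrl, Sum.inl.injEq, zero_add] at h1
      rw [ψrr, Sum.inr.injEq, zero_add] at h3
      rw [czero i h1 h3, one_def]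
    · rw [ψsl, Sum.inl.injEq] at h1 h2
      exfalso; apply hp2
      linear_combination h1 - h2
  have hlow : ∀ B : Finset S, (∀ g, (∀ x ∈ B, ψ g x = x) → g = 1) → 3 ≤ B.card := by
    intro B hB
    by_contra hlt
    by_cases hl : ∃ x, Sum.inl x ∈ B
    · by_cases hr : ∃ y, Sum.inr y ∈ B
      · obtain ⟨x, hx⟩ := hl
        obtain ⟨y, hy⟩ := hr
        have hBe : ({Sum.inl x, Sum.inr y} : Finset S) = B := by
          apply Finset.eq_of_subset_of_card_le
          · intro z hz
            simp only [Finset.mem_insert, Finset.mem_singleton] at hz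
            rcases hz with rfl | rfl <;> assumption
          · rw [Finset.card_pair (by simp)]; omega
        obtain ⟨i, h1, h2⟩ := crt (-(2 * x)) (-(2 * y))
        have := hB (sr i) (by
          intro z hz
          rw [← hBe] at hz
          simp only [Finset.mem_insert, Finset.mem_singleton] at hz
          rcases hz with rfl | rfl
          · rw [ψsl, h1]; congr 1; ring
          · rw [ψsr, h2]; congr 1; ring)
        rw [one_def] at this
        cases this
      · obtain ⟨i, h1, h2⟩ := crt 0 1
        have := hB (r i) (by
          rintro (z | z) hz
          · rw [ψrl, h1, add_zero]
          · exact absurd ⟨z, hz⟩ hr)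
        rw [one_def] at this
        have := r.inj this
        rw [this, map_zero] at h2
        exact zero_ne_one h2
    · obtain ⟨i, h1, h2⟩ := crt 1 0
      have := hB (r i) (by
        rintro (z | z) hz
        · exact absurd ⟨z, hz⟩ hl
        · rw [ψrr, h2, add_zero])
      rw [one_def] at this
      have := r.inj this
      rw [this, map_zero] at h1
      exact zero_ne_one h1
  let E : S ≃ Fin (Fintype.card S) := Fintype.equivFin S
  let φ : DihedralGroup (p * q) →* Equiv.Perm (Fin (Fintype.card S)) :=
    E.permCongrHom.toMonoidHom.comp ψ
  have hφ : ∀ g x, φ g x = E (ψ g (E.symm x)) := fun g x => rfl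
  have hinj : Function.Injective φ := by
    rw [injective_iff_map_eq_one]
    intro g hg
    have : ∀ x, ψ g x = x := by
      intro x
      have h := hφ g (E x)
      rw [hg] at h
      simpa using h.symm
    exact hfree g (this _) (this _) (this _)
  refine ⟨_, φ, hinj, ?_⟩
  apply permBaseSize_range φ hinj
  · refine ⟨({Sum.inl 0, Sum.inl 1, Sum.inr 0} : Finset S).map E.toEmbedding, ?_, ?_⟩
    · rw [Finset.card_map]
      rw [Finset.card_insert_of_notMem, Finset.card_pair]
      · exact Sum.inl_ne_inr
      · intro h
        rcases Finset.mem_insert.1 h with h | h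
        · exact zero_ne_one (Sum.inl.inj h)
        · cases Finset.mem_singleton.1 h
    · intro g hg
      have h : ∀ x ∈ ({Sum.inl 0, Sum.inl 1, Sum.inr 0} : Finset S), ψ g x = x := by
        intro x hx
        have := hg (E x) (Finset.mem_map_of_mem E.toEmbedding hx)
        rw [hφ] at this
        simpa using this
      exact hfree g (h _ (by simp)) (h _ (by simp)) (h _ (by simp))
  · intro B hB
    have := hlow (B.map E.symm.toEmbedding) (by
      intro g hg
      apply hB
      intro x hx
      have := hg (E.symm x) (Finset.mem_map_of_mem E.symm.toEmbedding hx)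
      rw [hφ, this, E.apply_symm_apply])
    rwa [Finset.card_map] at this

/-- For distinct odd primes `p` and `q`: no finite graph `Γ` with `Aut(Γ)` isomorphic to
the dihedral group of order `2pq` has determining number (minimal base size) `3`; the
determining set of `D_{pq}` is `{1, 2}`; and the base size set of `D_{pq}` contains `3`,
witnessed by a faithful permutation representation with base size `3`. -/
theorem stmt19 (p q : ℕ) (hp : p.Prime) (hq : q.Prime) (hop : Odd p) (hoq : Odd q)
    (hpq : p ≠ q) :
    (¬ ∃ (V : Type) (_ : Fintype V) (Γ : SimpleGraph V),
        Nonempty (graphAut Γ ≃* DihedralGroup (p * q)) ∧ graphBaseSize Γ = 3) ∧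
    (∀ (V : Type) (_ : Fintype V) (Γ : SimpleGraph V),
        Nonempty (graphAut Γ ≃* DihedralGroup (p * q)) →
          graphBaseSize Γ = 1 ∨ graphBaseSize Γ = 2) ∧
    (∀ m : ℕ, m = 1 ∨ m = 2 →
      ∃ (V : Type) (_ : Fintype V) (Γ : SimpleGraph V),
        Nonempty (graphAut Γ ≃* DihedralGroup (p * q)) ∧ graphBaseSize Γ = m) ∧
    (∃ (n : ℕ) (φ : DihedralGroup (p * q) →* Equiv.Perm (Fin n)),
        Function.Injective φ ∧ permBaseSize φ.range = 3) := by
  have hgt : 2 < p * q := by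
    have := hp.two_le
    have := hq.two_le
    nlinarith
  refine ⟨?_, ?_, ?_, base_three p q hp hq hop hoq hpq⟩
  · rintro ⟨V, _, Γ, he, h3⟩
    rcases part_two p q hp hq hop hoq hpq V Γ he with h | h <;> omega
  · intro V _ Γ he
    exact part_two p q hp hq hop hoq hpq V Γ he
  · rintro m (rfl | rfl)
    · exact tri_part hgt
    · exact cycle_part hgt
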